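/- arXiv:1211.2147 — 2 statements merged into one kernel-verified Lean document; each statement's English description precedes it below -/
import Mathlib

section
/- Every extremely abundant number is superabundant. -/
open Real Finset

noncomputable section

/-- Sum of divisors of `n`. -/
def sigma1 (n : ℕ) : ℕ := n.divisors.sum id

/-- `n` is superabundant if `σ(n)/n > σ(m)/m` for all positive `m < n`. -/
def Superabundant (n : ℕ) : Prop :=
  0 < n ∧ ∀ m : ℕ, 0 < m → m < n → (sigma1 m : ℝ) / m < (sigma1 n : ℝ) / n

/-- Robin's quotient `f(n) = σ(n)/(n log log n)`. -/
def robinF (n : ℕ) : ℝ := (sigma1 n : ℝ) / (n * Real.log (Real.log n))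

/-- `n` is extremely abundant. -/
def ExtremelyAbundant (n : ℕ) : Prop :=
  n = 10080 ∨ (10080 < n ∧ ∀ m : ℕ, 10080 ≤ m → m < n → robinF m < robinF n)

/-!
For `n > m ≥ 3`, the abundancy index `σ(n)/n` is `robinF n` times the positive increasing factor
`log log n`, so an extremely abundant `n > 10080` beats every `m` with `10080 ≤ m < n`. It remains
to beat the smaller `m`, that is, to see that `10080` is itself superabundant. The first place
where the maximum of `σ(k)/k` over `k ≤ m` is attained is a superabundant number, so only
superabundant numbers below `10080` can compete. By the exchange argument of Alaoglu and Erdős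
their prime exponents are nonincreasing: moving a larger exponent to a smaller prime decreases the
number and does not decrease its abundancy index. Hence `(p#) ^ v_p(n)` divides `n`, which leaves a
short list of candidates.
-/

theorem geom_sum_mul_geom_sum_le {R : Type*} [CommSemiring R] [PartialOrder R] [IsOrderedRing R]
    {x y : R} (hy : 0 ≤ y) (hyx : y ≤ x) {i j : ℕ} (hij : i ≤ j) :
    (∑ s ∈ range i, x ^ s) * ∑ t ∈ range j, y ^ t ≤
      (∑ t ∈ range j, x ^ t) * ∑ s ∈ range i, y ^ s := by
  induction j, hij using Nat.le_induction with
  | base => rfl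
  | succ j hij ih =>
    have hterm : ∀ s ∈ range i, x ^ s * y ^ j ≤ x ^ j * y ^ s := by
      intro s hs
      obtain ⟨k, rfl⟩ := Nat.exists_eq_add_of_le ((mem_range.mp hs).le.trans hij)
      calc x ^ s * y ^ (s + k) = x ^ s * y ^ s * y ^ k := by ring
        _ ≤ x ^ s * y ^ s * x ^ k := by
            have hx : 0 ≤ x := hy.trans hyx
            gcongr
        _ = x ^ (s + k) * y ^ s := by ring
    rw [sum_range_succ, sum_range_succ, mul_add, add_mul]
    refine add_le_add ih ?_
    rw [sum_mul, mul_sum]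
    exact sum_le_sum hterm

theorem abundancyIndex_nonneg (n : ℕ) : 0 ≤ n.abundancyIndex := by
  unfold Nat.abundancyIndex
  positivity

theorem abundancyIndex_mul_of_coprime {m n : ℕ} (h : m.Coprime n) :
    (m * n).abundancyIndex = m.abundancyIndex * n.abundancyIndex := by
  simp only [Nat.abundancyIndex, h.sum_divisors_mul, Nat.cast_mul, div_mul_div_comm]

theorem abundancyIndex_prime_pow {p : ℕ} (hp : p.Prime) (a : ℕ) :
    (p ^ a).abundancyIndex = ∑ s ∈ range (a + 1), (p⁻¹ : ℚ) ^ s := by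
  have hp0 : (p : ℚ) ≠ 0 := by exact_mod_cast hp.ne_zero
  rw [Nat.abundancyIndex, Nat.sum_divisors_prime_pow hp, Nat.cast_sum, sum_div,
    ← sum_range_reflect]
  refine sum_congr rfl fun s hs => ?_
  have hsa : s ≤ a := Nat.lt_succ_iff.mp (mem_range.mp hs)
  rw [Nat.add_sub_cancel, Nat.cast_pow, Nat.cast_pow, pow_sub₀ _ hp0 hsa, inv_pow]
  field_simp

theorem abundancyIndex_pow_mul_pow_le {p q : ℕ} (hq : q.Prime) (hp : p.Prime) (hqp : q ≤ p)
    {i j : ℕ} (hij : i ≤ j) :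
    (q ^ i).abundancyIndex * (p ^ j).abundancyIndex ≤
      (q ^ j).abundancyIndex * (p ^ i).abundancyIndex := by
  have hq0 : (0 : ℚ) < q := by exact_mod_cast hq.pos
  simp only [abundancyIndex_prime_pow hp, abundancyIndex_prime_pow hq]
  exact geom_sum_mul_geom_sum_le (by positivity) (by gcongr) (by omega)

theorem abundancyIndex_eq_prod {n : ℕ} {s : Finset ℕ} (hn : n ≠ 0) (hs : n.primeFactors ⊆ s) :
    n.abundancyIndex = ∏ p ∈ s, (p ^ n.factorization p).abundancyIndex := by
  have hone : (1).abundancyIndex = 1 := by simp [Nat.abundancyIndex]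
  rw [Nat.multiplicative_factorization _ (fun _ _ => abundancyIndex_mul_of_coprime) hone hn]
  exact Finsupp.prod_of_support_subset _ hs _ fun p _ => by rw [pow_zero, hone]

theorem sigma1_div_eq_abundancyIndex (n : ℕ) : (sigma1 n : ℝ) / n = n.abundancyIndex := by
  simp [sigma1, Nat.abundancyIndex]

theorem superabundant_iff {n : ℕ} :
    Superabundant n ↔
      0 < n ∧ ∀ m : ℕ, 0 < m → m < n → m.abundancyIndex < n.abundancyIndex := by
  simp only [Superabundant, sigma1_div_eq_abundancyIndex, Rat.cast_lt]

theorem exists_superabundant_le {m : ℕ} (hm : 0 < m) :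
    ∃ n ≤ m, Superabundant n ∧ m.abundancyIndex ≤ n.abundancyIndex := by
  induction m using Nat.strong_induction_on with
  | _ m ih =>
    by_cases h : Superabundant m
    · exact ⟨m, le_rfl, h, le_rfl⟩
    · simp only [superabundant_iff, hm, true_and, not_forall, not_lt] at h
      obtain ⟨k, hk, hkm, hle⟩ := h
      obtain ⟨n, hnk, hn, hkn⟩ := ih k hkm hk
      exact ⟨n, hnk.trans hkm.le, hn, hle.trans hkn⟩

namespace Superabundant

theorem exponent_le {p q i j r : ℕ} (h : Superabundant (q ^ i * p ^ j * r)) (hq : q.Prime)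
    (hp : p.Prime) (hqp : q < p) (hqr : q.Coprime r) (hpr : p.Coprime r) : j ≤ i := by
  by_contra! hij
  obtain ⟨hpos, hmax⟩ := superabundant_iff.mp h
  have hq0 : 0 < q := hq.pos
  have hp0 : 0 < p := hp.pos
  have hr : 0 < r := Nat.pos_of_ne_zero (right_ne_zero_of_mul hpos.ne')
  have habundancy (a b : ℕ) : (q ^ a * p ^ b * r).abundancyIndex =
      (q ^ a).abundancyIndex * (p ^ b).abundancyIndex * r.abundancyIndex := by
    have hcop : (q ^ a).Coprime (p ^ b) := ((Nat.coprime_primes hq hp).mpr hqp.ne).pow a b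
    rw [abundancyIndex_mul_of_coprime ((hqr.pow_left a).mul_left (hpr.pow_left b)),
      abundancyIndex_mul_of_coprime hcop]
  have hswap_lt : q ^ j * p ^ i * r < q ^ i * p ^ j * r := by
    obtain ⟨k, rfl⟩ := Nat.exists_eq_add_of_lt hij
    calc q ^ (i + k + 1) * p ^ i * r = q ^ i * p ^ i * r * q ^ (k + 1) := by ring
      _ < q ^ i * p ^ i * r * p ^ (k + 1) := by gcongr
      _ = q ^ i * p ^ (i + k + 1) * r := by ring
  have hswap_pos : 0 < q ^ j * p ^ i * r := by positivity
  refine (hmax _ hswap_pos hswap_lt).not_ge ?_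
  rw [habundancy, habundancy]
  exact mul_le_mul_of_nonneg_right (abundancyIndex_pow_mul_pow_le hq hp hqp.le hij.le)
    (abundancyIndex_nonneg r)

theorem factorization_le_factorization {n p q : ℕ} (h : Superabundant n) (hq : q.Prime)
    (hp : p.Prime) (hqp : q ≤ p) : n.factorization p ≤ n.factorization q := by
  rcases hqp.eq_or_lt with rfl | hqp
  · rfl
  obtain ⟨i, s, hqs, rfl⟩ := Nat.exists_eq_pow_mul_and_not_dvd h.1.ne' q hq.ne_one
  have hs : s ≠ 0 := right_ne_zero_of_mul h.1.ne'
  obtain ⟨j, r, hpr, rfl⟩ := Nat.exists_eq_pow_mul_and_not_dvd hs p hp.ne_one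
  have hr : r ≠ 0 := right_ne_zero_of_mul hs
  have hqr : ¬q ∣ r := fun hdvd => hqs (hdvd.mul_left _)
  have hvq : (q ^ i * (p ^ j * r)).factorization q = i := by
    rw [Nat.factorization_mul (pow_ne_zero i hq.ne_zero) hs]
    simp [hq.factorization, Nat.factorization_eq_zero_of_not_dvd hqs]
  have hvp : (q ^ i * (p ^ j * r)).factorization p = j := by
    rw [mul_left_comm, Nat.factorization_mul (pow_ne_zero j hp.ne_zero)
      (mul_ne_zero (pow_ne_zero i hq.ne_zero) hr)]
    simp [Nat.factorization_mul, hp.factorization, hq.factorization, hq.ne_zero, hr, hqp.ne',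
      Nat.factorization_eq_zero_of_not_dvd hpr]
  rw [hvq, hvp]
  rw [← mul_assoc] at h
  exact h.exponent_le hq hp hqp (hq.coprime_iff_not_dvd.mpr hqr) (hp.coprime_iff_not_dvd.mpr hpr)

theorem primorial_pow_dvd {n p : ℕ} (h : Superabundant n) (hp : p.Prime) :
    primorial p ^ n.factorization p ∣ n := by
  have hn : n ≠ 0 := h.1.ne'
  rw [← Nat.factorization_prime_le_iff_dvd (pow_ne_zero _ (primorial_ne_zero p)) hn]
  intro q hq
  rw [Nat.factorization_pow, Finsupp.smul_apply, smul_eq_mul]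
  rcases le_or_gt q p with hqp | hpq
  · calc n.factorization p * (primorial p).factorization q ≤ n.factorization p * 1 := by
          gcongr
          exact (squarefree_primorial p).natFactorization_le_one q
      _ ≤ n.factorization q := by simpa using h.factorization_le_factorization hq hp hqp
  · have hndvd : ¬q ∣ primorial p := by rwa [hq.dvd_primorial_iff, not_le]
    simp [Nat.factorization_eq_zero_of_not_dvd hndvd]

theorem factorization_lt {n p k : ℕ} (h : Superabundant n) (hp : p.Prime)
    (hk : n < primorial p ^ k) : n.factorization p < k := by
  have hone : 1 < primorial p := hp.one_lt.trans_le le_primorial_self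
  exact (Nat.pow_lt_pow_iff_right hone).mp
    ((Nat.le_of_dvd h.1 (h.primorial_pow_dvd hp)).trans_lt hk)

theorem primeFactors_subset_primesBelow {n m : ℕ} (h : Superabundant n) (hn : n < primorial m) :
    n.primeFactors ⊆ Nat.primesBelow m := by
  intro p hpn
  have hp : p.Prime := Nat.prime_of_mem_primeFactors hpn
  refine Nat.mem_primesBelow.mpr ⟨?_, hp⟩
  by_contra! hmp
  have hlt : n < primorial p ^ 1 := by
    rw [pow_one]
    exact hn.trans_le (primorial_mono hmp)
  have hpos : 0 < n.factorization p :=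
    hp.factorization_pos_of_dvd h.1.ne' (Nat.dvd_of_mem_primeFactors hpn)
  exact hpos.ne' (Nat.lt_one_iff.mp (h.factorization_lt hp hlt))

end Superabundant

theorem prod_pow_factorization_of_primeFactors_subset {n : ℕ} {s : Finset ℕ} (hn : n ≠ 0)
    (hs : n.primeFactors ⊆ s) : ∏ p ∈ s, p ^ n.factorization p = n := by
  conv_rhs => rw [← Nat.prod_factorization_pow_eq_self hn]
  exact (Finsupp.prod_of_support_subset _ hs _ fun p _ => pow_zero p).symm

theorem prod_geom_sum_inv_lt_of_prod_pow_lt_10080 :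
    ∀ a ∈ range 14, ∀ b ∈ range 6, ∀ c ∈ range 3, ∀ d ∈ range 2, ∀ e ∈ range 2,
      2 ^ a * 3 ^ b * 5 ^ c * 7 ^ d * 11 ^ e < 10080 →
      (∑ i ∈ range (a + 1), (2⁻¹ : ℚ) ^ i) * (∑ i ∈ range (b + 1), (3⁻¹ : ℚ) ^ i) *
        (∑ i ∈ range (c + 1), (5⁻¹ : ℚ) ^ i) * (∑ i ∈ range (d + 1), (7⁻¹ : ℚ) ^ i) *
        ∑ i ∈ range (e + 1), (11⁻¹ : ℚ) ^ i < 39 / 10 := by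
  decide +kernel

theorem abundancyIndex_10080 : (10080).abundancyIndex = 39 / 10 := by
  decide +kernel

theorem Superabundant.abundancyIndex_lt_of_lt_10080 {n : ℕ} (h : Superabundant n)
    (hn : n < 10080) : n.abundancyIndex < 39 / 10 := by
  have hn0 : n ≠ 0 := h.1.ne'
  have hprimorial : primorial 13 = 30030 := by decide
  have hprimes : Nat.primesBelow 13 = {2, 3, 5, 7, 11} := by decide
  have hsupp : n.primeFactors ⊆ {2, 3, 5, 7, 11} :=
    hprimes ▸ h.primeFactors_subset_primesBelow (by omega)
  have hmem {p : ℕ} (hp : p.Prime) {k : ℕ} (hk : 10080 ≤ primorial p ^ k) :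
      n.factorization p ∈ range k :=
    mem_range.mpr (h.factorization_lt hp (hn.trans_le hk))
  have hbound := prod_geom_sum_inv_lt_of_prod_pow_lt_10080
    _ (hmem Nat.prime_two (by decide)) _ (hmem Nat.prime_three (by decide))
    _ (hmem Nat.prime_five (by decide)) _ (hmem Nat.prime_seven (by decide))
    _ (hmem Nat.prime_eleven (by decide))
  have hprod : 2 ^ n.factorization 2 * 3 ^ n.factorization 3 * 5 ^ n.factorization 5 *
      7 ^ n.factorization 7 * 11 ^ n.factorization 11 = n := by
    simpa [← mul_assoc] using prod_pow_factorization_of_primeFactors_subset hn0 hsupp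
  rw [hprod] at hbound
  simpa [abundancyIndex_eq_prod hn0 hsupp, abundancyIndex_prime_pow, Nat.prime_two,
    Nat.prime_three, Nat.prime_five, Nat.prime_seven, Nat.prime_eleven, ← mul_assoc]
    using hbound hn

theorem superabundant_10080 : Superabundant 10080 := by
  refine superabundant_iff.mpr ⟨by norm_num, fun m hm hlt => ?_⟩
  obtain ⟨n, hnm, hn, hmn⟩ := exists_superabundant_le hm
  rw [abundancyIndex_10080]
  exact hmn.trans_lt (hn.abundancyIndex_lt_of_lt_10080 (hnm.trans_lt hlt))

theorem robinF_eq_abundancyIndex_div (n : ℕ) :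
    robinF n = n.abundancyIndex / Real.log (Real.log n) := by
  rw [robinF, ← div_div, sigma1_div_eq_abundancyIndex]

theorem log_log_natCast_pos {m : ℕ} (hm : 3 ≤ m) : 0 < Real.log (Real.log m) := by
  refine Real.log_pos ((Real.lt_log_iff_exp_lt (by positivity)).mpr ?_)
  exact Real.exp_one_lt_three.trans_le (by exact_mod_cast hm)

theorem abundancyIndex_lt_of_robinF_lt {m n : ℕ} (hm : 3 ≤ m) (hmn : m < n)
    (h : robinF m < robinF n) : m.abundancyIndex < n.abundancyIndex := by
  have hm_pos : 0 < Real.log (Real.log m) := log_log_natCast_pos hm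
  have hn_pos : 0 < Real.log (Real.log n) := log_log_natCast_pos (hm.trans hmn.le)
  have hmono : Real.log (Real.log m) ≤ Real.log (Real.log n) := by
    have hlog : 0 < Real.log m := Real.log_pos (by exact_mod_cast (by omega : 1 < m))
    gcongr
  have hn_nonneg : (0 : ℝ) ≤ n.abundancyIndex := by exact_mod_cast abundancyIndex_nonneg n
  rw [robinF_eq_abundancyIndex_div, robinF_eq_abundancyIndex_div, div_lt_iff₀ hm_pos] at h
  suffices (m.abundancyIndex : ℝ) < n.abundancyIndex by exact_mod_cast this
  calc (m.abundancyIndex : ℝ)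
      < n.abundancyIndex / Real.log (Real.log n) * Real.log (Real.log m) := h
    _ ≤ n.abundancyIndex / Real.log (Real.log n) * Real.log (Real.log n) := by gcongr
    _ = n.abundancyIndex := div_mul_cancel₀ _ hn_pos.ne'

theorem extremely_abundant_is_superabundant (n : ℕ) (h : ExtremelyAbundant n) :
    Superabundant n := by
  rcases h with rfl | ⟨hn, hF⟩
  · exact superabundant_10080
  · have hlarge (m : ℕ) (hm : 10080 ≤ m) (hmn : m < n) : m.abundancyIndex < n.abundancyIndex :=
      abundancyIndex_lt_of_robinF_lt (by omega) hmn (hF m hm hmn)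
    refine superabundant_iff.mpr ⟨by omega, fun m hm hmn => ?_⟩
    rcases lt_or_ge m 10080 with hsmall | hge
    · calc m.abundancyIndex < (10080).abundancyIndex :=
            (superabundant_iff.mp superabundant_10080).2 m hm hsmall
        _ < n.abundancyIndex := hlarge 10080 le_rfl hn
    · exact hlarge m hge hmn
end
end

section
/- Let N < N' be two consecutive colossally abundant numbers and suppose there exists an extremely abundant number n with 10080 < n and N < n < N'. Assuming Robin's proposition that for all m with 3 ≤ N ≤ m ≤ N', f(m) ≤ max{f(N), f(N')} where f(m) = σ(m)/(m·log log m), it follows that N' is extremely abundant. -/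
open Real Finset

noncomputable section

/-- `N` is colossally abundant. -/
def ColossallyAbundant (N : ℕ) : Prop :=
  0 < N ∧ ∃ ε : ℝ, 0 < ε ∧ ∀ m : ℕ, 1 < m →
    (sigma1 m : ℝ) / (m : ℝ) ^ ((1 : ℝ) + ε) ≤ (sigma1 N : ℝ) / (N : ℝ) ^ ((1 : ℝ) + ε)

/-!
Two consecutive colossally abundant numbers `N < N'` maximize `σ(m) / m ^ (1 + ε)` for one common
exponent `ε`. Writing `f(m)` as this quotient times `exp (ε * log m - log (log m))`, strict
concavity of `log ∘ log` gives Robin's inequality in the strict form `f(m) < max (f(N)) (f(N'))`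
for `N < m < N'`. An extremely abundant `n` strictly between them has `f(N) < f(n)` once
`10080 ≤ N`, so the maximum is `f(N')`, which therefore exceeds every earlier value. The remaining
case `N < 10080` does not occur: `55440` is colossally abundant, so `n` would lie strictly between
`10080` and `55440`, where `f` does not exceed `f(10080)`.
-/

open Filter Topology
open ArithmeticFunction hiding log

/-- The quotient `n ↦ σ(n) / n ^ (1 + ε)`, whose maximizers over `n > 1` are the colossally
abundant numbers of exponent `ε`. It is an `ArithmeticFunction` because it is multiplicative. -/
def caQuotient (ε : ℝ) : ArithmeticFunction ℝ where
  toFun n := sigma1 n / (n : ℝ) ^ (1 + ε)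
  map_zero' := by simp [sigma1]

lemma sigma1_eq_sigma (n : ℕ) : sigma1 n = sigma 1 n := by
  simp [sigma1, sigma_one_apply]

lemma sigma1_pos {n : ℕ} (hn : n ≠ 0) : 0 < sigma1 n := by
  rw [sigma1_eq_sigma]
  exact sigma_pos 1 n hn

lemma sigma1_prime_pow_succ {p : ℕ} (hp : p.Prime) (a : ℕ) :
    sigma1 (p ^ (a + 1)) = p * sigma1 (p ^ a) + 1 := by
  simp only [sigma1_eq_sigma, sigma_one_apply_prime_pow hp]
  exact geom_sum_succ

lemma monotone_sigma1_prime_pow {p : ℕ} (hp : p.Prime) : Monotone fun a => sigma1 (p ^ a) := by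
  refine monotone_nat_of_le_succ fun a => ?_
  rw [sigma1_prime_pow_succ hp]
  exact (Nat.le_mul_of_pos_left _ hp.pos).trans (Nat.le_succ _)

lemma sigma1_le_mul_harmonic (n : ℕ) : (sigma1 n : ℝ) ≤ n * (harmonic n : ℝ) := by
  have hsum : (sigma1 n : ℝ) = ∑ d ∈ n.divisors, (n : ℝ) * (d : ℝ)⁻¹ := by
    rw [sigma1_eq_sigma, sigma_eq_sum_div]
    push_cast
    refine sum_congr rfl fun d hd => ?_
    rw [pow_one, Nat.cast_div (Nat.dvd_of_mem_divisors hd)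
      (by exact_mod_cast (Nat.pos_of_mem_divisors hd).ne'), div_eq_mul_inv]
  rw [hsum, harmonic_eq_sum_Icc, ← mul_sum]
  push_cast
  gcongr with d hd
  exact fun d hd => mem_Icc.2 ⟨Nat.pos_of_mem_divisors hd, Nat.divisor_le hd⟩

lemma caQuotient_pos (ε : ℝ) {n : ℕ} (hn : n ≠ 0) : 0 < caQuotient ε n := by
  have hσ : (0 : ℝ) < sigma1 n := by exact_mod_cast sigma1_pos hn
  exact div_pos hσ (by positivity)

lemma caQuotient_nonneg (ε : ℝ) (n : ℕ) : 0 ≤ caQuotient ε n :=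
  div_nonneg (Nat.cast_nonneg _) (by positivity)

lemma isMultiplicative_caQuotient (ε : ℝ) : (caQuotient ε).IsMultiplicative := by
  refine ⟨by simp [caQuotient, sigma1], fun {m n} hmn => ?_⟩
  simp only [caQuotient, coe_mk, sigma1_eq_sigma, isMultiplicative_sigma.map_mul_of_coprime hmn,
    Nat.cast_mul, mul_rpow m.cast_nonneg n.cast_nonneg, mul_div_mul_comm]

lemma caQuotient_eq_mul_rpow (ε δ : ℝ) {n : ℕ} (hn : n ≠ 0) :
    caQuotient δ n = caQuotient ε n * (n : ℝ) ^ (ε - δ) := by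
  have hn' : (0 : ℝ) < n := by exact_mod_cast Nat.pos_of_ne_zero hn
  simp only [caQuotient, coe_mk]
  rw [div_mul_eq_mul_div, mul_div_assoc, ← rpow_sub hn', ← neg_sub (1 + ε), rpow_neg hn'.le,
    div_eq_mul_inv]
  congr 3
  ring

lemma continuous_caQuotient {n : ℕ} (hn : n ≠ 0) : Continuous fun ε => caQuotient ε n := by
  have hn' : (n : ℝ) ≠ 0 := by exact_mod_cast hn
  simp only [caQuotient, coe_mk]
  exact continuous_const.div ((continuous_const_rpow hn').comp (by fun_prop))
    fun ε => by positivity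

lemma tendsto_caQuotient_atTop {ε : ℝ} (hε : 0 < ε) :
    Tendsto (fun n => caQuotient ε n) atTop (𝓝 0) := by
  have hlim : Tendsto (fun x : ℝ => (1 + log x) / x ^ ε) atTop (𝓝 0) := by
    have hlog := (isLittleO_log_rpow_atTop hε).tendsto_div_nhds_zero
    have hone := (tendsto_rpow_atTop hε).inv_tendsto_atTop
    simpa [add_div] using hone.add hlog
  refine squeeze_zero' (.of_forall (caQuotient_nonneg ε)) ?_
    (hlim.comp tendsto_natCast_atTop_atTop)
  filter_upwards [eventually_gt_atTop 0] with n hn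
  have hn' : (0 : ℝ) < n := by exact_mod_cast hn
  calc caQuotient ε n = sigma1 n / n / (n : ℝ) ^ ε := by
        rw [div_div, ← rpow_one_add' hn'.le (by linarith)]
        rfl
    _ ≤ (1 + log n) / (n : ℝ) ^ ε := by
        gcongr
        rw [div_le_iff₀' hn']
        exact (sigma1_le_mul_harmonic n).trans (by gcongr; exact harmonic_le_one_add_log n)

lemma exists_caQuotient_maximizer {ε : ℝ} (hε : 0 < ε) :
    ∃ M, 1 < M ∧ ∀ m, 1 < m → caQuotient ε m ≤ caQuotient ε M := by
  have hlim := (tendsto_add_atTop_iff_nat 2).2 (tendsto_caQuotient_atTop hε)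
  obtain ⟨k, hk⟩ := (continuous_of_discreteTopology
      (f := fun k : ℕ => caQuotient ε (k + 2))).exists_forall_ge' 0 (by
    rw [cocompact_eq_cofinite, Nat.cofinite_eq_atTop]
    exact hlim.eventually_le_const (caQuotient_pos ε (by norm_num)))
  refine ⟨k + 2, by omega, fun m hm => ?_⟩
  simpa [Nat.sub_add_cancel hm] using hk (m - 2)

/-! ### Consecutive colossally abundant numbers -/

lemma exponent_le_of_caQuotient_le {ε δ : ℝ} {a b : ℕ} (ha : a ≠ 0) (hab : a < b)
    (hε : caQuotient ε b ≤ caQuotient ε a) (hδ : caQuotient δ a ≤ caQuotient δ b) : δ ≤ ε := by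
  by_contra! hlt
  have ha' : (0 : ℝ) < a := by exact_mod_cast Nat.pos_of_ne_zero ha
  refine hδ.not_gt ?_
  calc caQuotient δ b = caQuotient ε b * (b : ℝ) ^ (ε - δ) := caQuotient_eq_mul_rpow ε δ (by omega)
    _ ≤ caQuotient ε a * (b : ℝ) ^ (ε - δ) := by gcongr
    _ < caQuotient ε a * (a : ℝ) ^ (ε - δ) := by
        refine mul_lt_mul_of_pos_left ?_ (caQuotient_pos ε ha)
        exact rpow_lt_rpow_of_neg ha' (by exact_mod_cast hab) (by linarith)
    _ = caQuotient δ a := (caQuotient_eq_mul_rpow ε δ ha).symm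

lemma exists_common_exponent {N N' : ℕ} (hN : ColossallyAbundant N) (hN' : ColossallyAbundant N')
    (hcons : ∀ m, N < m → m < N' → ¬ ColossallyAbundant m) (h1 : 1 < N) (hlt : N < N') :
    ∃ ε, caQuotient ε N = caQuotient ε N' ∧ ∀ m, 1 < m → caQuotient ε m ≤ caQuotient ε N := by
  obtain ⟨-, ε₁, -, hmax₁⟩ := hN
  obtain ⟨-, ε₂, hε₂, hmax₂⟩ := hN'
  obtain ⟨ε, hε⟩ : ∃ ε, caQuotient ε N = caQuotient ε N' :=
    intermediate_value_univ₂ (continuous_caQuotient (by omega)) (continuous_caQuotient (by omega))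
      (hmax₂ N h1) (hmax₁ N' (by omega))
  have hle₁ : ε ≤ ε₁ :=
    exponent_le_of_caQuotient_le (by omega) hlt (hmax₁ N' (by omega)) hε.le
  have hle₂ : ε₂ ≤ ε := exponent_le_of_caQuotient_le (by omega) hlt hε.ge (hmax₂ N h1)
  obtain ⟨M, hM, hmax⟩ := exists_caQuotient_maximizer (hε₂.trans_le hle₂)
  refine ⟨ε, hε, fun m hm => (hmax m hm).trans ?_⟩
  -- A maximizer for the crossing exponent cannot lie strictly between `N` and `N'`; one outside
  -- `[N, N']` forces the exponents of `M` and of the nearer endpoint to coincide.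
  rcases lt_trichotomy M N with hMN | rfl | hNM
  · obtain rfl : ε = ε₁ := hle₁.antisymm <|
      exponent_le_of_caQuotient_le (by omega) hMN (hmax N h1) (hmax₁ M hM)
    exact hmax₁ M hM
  · exact le_rfl
  rcases lt_trichotomy M N' with hMN' | rfl | hN'M
  · exact absurd ⟨by omega, ε, hε₂.trans_le hle₂, hmax⟩ (hcons M hNM hMN')
  · exact hε.ge
  · obtain rfl : ε = ε₂ := le_antisymm
      (exponent_le_of_caQuotient_le (by omega) hN'M (hmax₂ M hM) (hmax N' (by omega))) hle₂
    exact (hmax₂ M hM).trans hε.ge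

/-! ### Robin's quotient -/

lemma one_lt_log_natCast {n : ℕ} (hn : 3 ≤ n) : 1 < log n := by
  have hn' : (3 : ℝ) ≤ n := by exact_mod_cast hn
  rw [lt_log_iff_exp_lt (by linarith)]
  linarith [exp_one_lt_d9]

lemma robinF_eq_caQuotient_mul_exp (ε : ℝ) {n : ℕ} (hn : 3 ≤ n) :
    robinF n = caQuotient ε n * exp (ε * log n - log (log (log n))) := by
  have hn' : (0 : ℝ) < n := by exact_mod_cast (by omega : 0 < n)
  rw [exp_sub, exp_log (log_pos (one_lt_log_natCast hn)), mul_comm ε, exp_mul, exp_log hn']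
  simp only [robinF, caQuotient, coe_mk, rpow_add hn', rpow_one]
  field_simp

lemma strictConcaveOn_log_log : StrictConcaveOn ℝ (Set.Ioi 1) fun t => log (log t) := by
  have himage : log '' Set.Ioi 1 = Set.Ioi 0 := by
    refine Set.Subset.antisymm (Set.image_subset_iff.2 fun t ht => log_pos ht) fun t ht => ?_
    exact ⟨exp t, one_lt_exp_iff.2 ht, log_exp t⟩
  have hsubset : Set.Ioi (1 : ℝ) ⊆ Set.Ioi 0 := Set.Ioi_subset_Ioi zero_le_one
  exact StrictConcaveOn.comp (himage ▸ strictConcaveOn_log_Ioi)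
    (strictConcaveOn_log_Ioi.subset hsubset (convex_Ioi 1)) (himage ▸ strictMonoOn_log)
    (log_injOn_pos.mono hsubset)

lemma strictConvexOn_mul_sub_log_log (ε : ℝ) :
    StrictConvexOn ℝ (Set.Ioi 1) fun t => ε * t - log (log t) :=
  ((LinearMap.mulLeft ℝ ε).convexOn (convex_Ioi 1)).sub_strictConcaveOn strictConcaveOn_log_log

lemma robinF_lt_max {N N' m : ℕ} (hN : ColossallyAbundant N) (hN' : ColossallyAbundant N')
    (hcons : ∀ m, N < m → m < N' → ¬ ColossallyAbundant m) (h3 : 3 ≤ N)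
    (hNm : N < m) (hmN' : m < N') : robinF m < max (robinF N) (robinF N') := by
  obtain ⟨ε, hε, hmax⟩ := exists_common_exponent hN hN' hcons (by omega) (by omega)
  have hlog {a b : ℕ} (ha : 0 < a) (hab : a < b) : log (a : ℝ) < log b :=
    log_lt_log (by exact_mod_cast ha) (by exact_mod_cast hab)
  have hgrowth := (strictConvexOn_mul_sub_log_log ε).lt_on_openSegment
    (one_lt_log_natCast h3) (one_lt_log_natCast (n := N') (by omega))
    (hlog (by omega) (hNm.trans hmN')).ne (z := log m) <| by
      rw [openSegment_eq_Ioo (hlog (by omega) (hNm.trans hmN'))]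
      exact ⟨hlog (by omega) hNm, hlog (by omega) hmN'⟩
  have hpos := caQuotient_pos ε (n := N) (by omega)
  rw [robinF_eq_caQuotient_mul_exp ε h3, robinF_eq_caQuotient_mul_exp ε (n := N') (by omega),
    robinF_eq_caQuotient_mul_exp ε (n := m) (by omega), ← hε, ← mul_max_of_nonneg _ _ hpos.le,
    ← exp_monotone.map_max]
  calc _ ≤ caQuotient ε N * exp (ε * log m - log (log (log m))) := by
        gcongr
        exact hmax m (by omega)
    _ < _ := by gcongr

lemma sub_div_le_log_sub_log {x y : ℝ} (hx : 0 < x) (hy : 0 < y) :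
    (y - x) / y ≤ log y - log x := by
  have h := one_sub_inv_le_log_of_pos (div_pos hy hx)
  rwa [log_div hy.ne' hx.ne', inv_div, one_sub_div hy.ne'] at h

-- The derivative `ε - 1 / (x * log x)` of `ε * x - log (log x)` is nonpositive on `[t, u]`.
lemma mul_sub_log_log_le {ε t u : ℝ} (ht : 1 < t) (htu : t ≤ u) (hu : ε * (u * log u) ≤ 1) :
    ε * u - log (log u) ≤ ε * t - log (log t) := by
  have hu1 : 1 < u := ht.trans_le htu
  have hlogu := log_pos hu1
  have hgrowth : ε * (u - t) ≤ log (log u) - log (log t) := by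
    calc ε * (u - t) ≤ (u - t) / u / log u := by
          rw [div_div, le_div_iff₀ (by positivity)]
          nlinarith
      _ ≤ (log u - log t) / log u := by
          gcongr
          exact sub_div_le_log_sub_log (by linarith) (by linarith)
      _ ≤ log (log u) - log (log t) := sub_div_le_log_sub_log (log_pos ht) hlogu
  linarith

/-! ### Optimal exponents of primes -/

lemma caQuotient_prime_pow_succ (ε : ℝ) {p : ℕ} (hp : p.Prime) (a : ℕ) :
    caQuotient ε (p ^ (a + 1)) =
      caQuotient ε (p ^ a) * ((p + (sigma1 (p ^ a) : ℝ)⁻¹) / (p : ℝ) ^ (1 + ε)) := by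
  have hσ : (sigma1 (p ^ a) : ℝ) ≠ 0 := by
    exact_mod_cast (sigma1_pos (pow_ne_zero a hp.ne_zero)).ne'
  simp only [caQuotient, coe_mk, sigma1_prime_pow_succ hp]
  push_cast
  rw [pow_succ, mul_rpow (by positivity) p.cast_nonneg, div_mul_div_comm, mul_add,
    mul_inv_cancel₀ hσ, mul_comm (p : ℝ)]

lemma caQuotient_prime_pow_logConcave (ε : ℝ) {p a b : ℕ} (hp : p.Prime) (hab : a ≤ b) :
    caQuotient ε (p ^ (b + 1)) * caQuotient ε (p ^ a) ≤
      caQuotient ε (p ^ (a + 1)) * caQuotient ε (p ^ b) := by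
  have hσ : (0 : ℝ) < sigma1 (p ^ a) := by
    exact_mod_cast sigma1_pos (pow_ne_zero a hp.ne_zero)
  have hσle : (sigma1 (p ^ a) : ℝ) ≤ sigma1 (p ^ b) := by
    exact_mod_cast monotone_sigma1_prime_pow hp hab
  rw [caQuotient_prime_pow_succ ε hp a, caQuotient_prime_pow_succ ε hp b, mul_right_comm,
    mul_comm (caQuotient ε (p ^ b)), mul_right_comm]
  have := caQuotient_nonneg ε (p ^ a)
  have := caQuotient_nonneg ε (p ^ b)
  gcongr

lemma caQuotient_prime_pow_le_of_le {ε : ℝ} {p a b : ℕ} (hp : p.Prime)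
    (h : caQuotient ε (p ^ (a + 1)) ≤ caQuotient ε (p ^ a)) (hab : a ≤ b) :
    caQuotient ε (p ^ b) ≤ caQuotient ε (p ^ a) := by
  induction b, hab using Nat.le_induction with
  | base => exact le_rfl
  | succ b hab ih =>
    have hconcave := caQuotient_prime_pow_logConcave ε hp hab
    refine le_trans (le_of_mul_le_mul_right (hconcave.trans ?_)
      (caQuotient_pos ε (pow_ne_zero a hp.ne_zero))) ih
    rw [mul_comm]
    exact mul_le_mul_of_nonneg_left h (caQuotient_nonneg ε _)

lemma caQuotient_prime_pow_le_of_ge {ε : ℝ} {p a b : ℕ} (hp : p.Prime)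
    (h : caQuotient ε (p ^ a) ≤ caQuotient ε (p ^ (a + 1))) (hba : b ≤ a) :
    caQuotient ε (p ^ b) ≤ caQuotient ε (p ^ a) := by
  induction hba using Nat.decreasingInduction with
  | self => exact le_rfl
  | of_succ c hca ih =>
    have hconcave := caQuotient_prime_pow_logConcave ε hp hca.le
    refine le_trans (le_of_mul_le_mul_right (le_trans ?_ hconcave)
      (caQuotient_pos ε (pow_ne_zero a hp.ne_zero))) ih
    rw [mul_comm]
    exact mul_le_mul_of_nonneg_right h (caQuotient_nonneg ε _)

lemma caQuotient_prime_pow_le_peak {ε : ℝ} {p a : ℕ} (hp : p.Prime)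
    (hup : caQuotient ε (p ^ a) ≤ caQuotient ε (p ^ (a + 1)))
    (hdown : caQuotient ε (p ^ (a + 2)) ≤ caQuotient ε (p ^ (a + 1))) (b : ℕ) :
    caQuotient ε (p ^ b) ≤ caQuotient ε (p ^ (a + 1)) := by
  rcases le_or_gt b a with hba | hab
  · exact (caQuotient_prime_pow_le_of_ge hp hup hba).trans hup
  · exact caQuotient_prime_pow_le_of_le hp hdown hab

lemma caQuotient_pow_factorization_le_of_not_dvd {ε : ℝ} {p a n : ℕ} (hp : p.Prime) (hn : n ≠ 0)
    (h : caQuotient ε (p ^ a) ≤ caQuotient ε (p ^ (a + 1))) (hdvd : ¬ p ^ (a + 1) ∣ n) :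
    caQuotient ε (p ^ n.factorization p) ≤ caQuotient ε (p ^ a) := by
  rw [hp.pow_dvd_iff_le_factorization hn, not_le, Nat.lt_succ_iff] at hdvd
  exact caQuotient_prime_pow_le_of_ge hp h hdvd

lemma caQuotient_pow_factorization_le_of_dvd {ε : ℝ} {p a n : ℕ} (hp : p.Prime) (hn : n ≠ 0)
    (h : caQuotient ε (p ^ (a + 1)) ≤ caQuotient ε (p ^ a)) (hdvd : p ^ a ∣ n) :
    caQuotient ε (p ^ n.factorization p) ≤ caQuotient ε (p ^ a) :=
  caQuotient_prime_pow_le_of_le hp h ((hp.pow_dvd_iff_le_factorization hn).1 hdvd)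

lemma multiplicative_eq_prod_of_primeFactors_subset {R : Type*} [CommMonoidWithZero R]
    {f : ArithmeticFunction R} (hf : f.IsMultiplicative) {n : ℕ} (hn : n ≠ 0) {s : Finset ℕ}
    (hs : n.primeFactors ⊆ s) : f n = ∏ p ∈ s, f (p ^ n.factorization p) := by
  rw [hf.multiplicative_factorization f hn]
  exact Finsupp.prod_of_support_subset _ hs _ fun p _ => by rw [pow_zero, hf.map_one]

lemma multiplicative_le_of_forall_prime {R : Type*} [CommSemiring R] [PartialOrder R]
    [IsOrderedRing R] {f : ArithmeticFunction R} (hf : f.IsMultiplicative) (hnonneg : ∀ n, 0 ≤ f n)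
    {m n : ℕ} (hm : m ≠ 0) (hn : n ≠ 0)
    (h : ∀ p, p.Prime → f (p ^ m.factorization p) ≤ f (p ^ n.factorization p)) : f m ≤ f n := by
  rw [multiplicative_eq_prod_of_primeFactors_subset hf hm
      (subset_union_left (s₂ := n.primeFactors)),
    multiplicative_eq_prod_of_primeFactors_subset hf hn
      (subset_union_right (s₁ := m.primeFactors))]
  refine prod_le_prod (fun p _ => hnonneg _) fun p hp => h p ?_
  rcases mem_union.1 hp with hp | hp <;> exact Nat.prime_of_mem_primeFactors hp

lemma caQuotient_le_iff_of_mul_eq_one {ε : ℝ} {k m n : ℕ} (hk : ε * k = 1) (hm : m ≠ 0)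
    (hn : n ≠ 0) : caQuotient ε m ≤ caQuotient ε n ↔
      sigma1 m ^ k * n ^ (k + 1) ≤ sigma1 n ^ k * m ^ (k + 1) := by
  have hk0 : k ≠ 0 := by
    rintro rfl
    simp at hk
  have hpow {l : ℕ} : caQuotient ε l ^ k = (sigma1 l : ℝ) ^ k / (l : ℝ) ^ (k + 1) := by
    simp only [caQuotient, coe_mk]
    rw [div_pow, ← rpow_mul_natCast l.cast_nonneg, add_mul, hk, one_mul, ← rpow_natCast _ (k + 1),
      Nat.cast_succ]
  have hm' : (0 : ℝ) < m := by exact_mod_cast Nat.pos_of_ne_zero hm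
  have hn' : (0 : ℝ) < n := by exact_mod_cast Nat.pos_of_ne_zero hn
  rw [← pow_le_pow_iff_left₀ (caQuotient_nonneg ε m) (caQuotient_nonneg ε n) hk0, hpow, hpow,
    div_le_div_iff₀ (pow_pos hm' _) (pow_pos hn' _)]
  norm_cast

/-! ### The exponent `1 / 30`

At this exponent the maximizer is `55440 = 2 ^ 4 * 3 ^ 2 * 5 * 7 * 11`, and among the `n` with
`10080 < n < 55440` only `27720 = 55440 / 2` has a larger quotient than `10080`. -/

lemma caQuotient_thirtieth_le {m n : ℕ} (h : sigma1 m ^ 30 * n ^ 31 ≤ sigma1 n ^ 30 * m ^ 31)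
    (hm : m ≠ 0 := by norm_num) (hn : n ≠ 0 := by norm_num) :
    caQuotient (1 / 30) m ≤ caQuotient (1 / 30) n :=
  (caQuotient_le_iff_of_mul_eq_one (by norm_num) hm hn).2 h

lemma caQuotient_thirtieth_two_pow_le (a : ℕ) :
    caQuotient (1 / 30) (2 ^ a) ≤ caQuotient (1 / 30) (2 ^ 4) :=
  caQuotient_prime_pow_le_peak Nat.prime_two
    (caQuotient_thirtieth_le (by decide +kernel))
    (caQuotient_thirtieth_le (by decide +kernel)) a

lemma caQuotient_thirtieth_three_pow_le (a : ℕ) :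
    caQuotient (1 / 30) (3 ^ a) ≤ caQuotient (1 / 30) (3 ^ 2) :=
  caQuotient_prime_pow_le_peak Nat.prime_three
    (caQuotient_thirtieth_le (by decide +kernel))
    (caQuotient_thirtieth_le (by decide +kernel)) a

lemma caQuotient_thirtieth_prime_pow_le_of_mem {p : ℕ} (hp : p ∈ ({5, 7, 11} : Finset ℕ)) (a : ℕ) :
    caQuotient (1 / 30) (p ^ a) ≤ caQuotient (1 / 30) (p ^ 1) := by
  simp only [mem_insert, mem_singleton] at hp
  rcases hp with rfl | rfl | rfl <;>
  exact caQuotient_prime_pow_le_peak (by norm_num)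
    (caQuotient_thirtieth_le (by decide +kernel))
    (caQuotient_thirtieth_le (by decide +kernel)) a

lemma add_one_pow_thirty_le {x : ℕ} (hx : 13 ≤ x) : (x + 1) ^ 30 ≤ x ^ 31 := by
  have hscaled : (13 * (x + 1)) ^ 30 ≤ 13 ^ 30 * x ^ 31 := by
    calc (13 * (x + 1)) ^ 30 ≤ (14 * x) ^ 30 := Nat.pow_le_pow_left (by omega) 30
      _ = 14 ^ 30 * x ^ 30 := mul_pow ..
      _ ≤ 13 ^ 31 * x ^ 30 := Nat.mul_le_mul_right _ (by norm_num)
      _ = 13 ^ 30 * (13 * x ^ 30) := by ring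
      _ ≤ 13 ^ 30 * (x * x ^ 30) := by gcongr
      _ = 13 ^ 30 * x ^ 31 := by rw [pow_succ' x 30]
  rw [mul_pow] at hscaled
  exact Nat.le_of_mul_le_mul_left hscaled (by positivity)

lemma caQuotient_thirtieth_prime_pow_le_one {p : ℕ} (hp : p.Prime) (h13 : 13 ≤ p) (a : ℕ) :
    caQuotient (1 / 30) (p ^ a) ≤ 1 := by
  suffices hfirst : caQuotient (1 / 30) (p ^ (0 + 1)) ≤ caQuotient (1 / 30) (p ^ 0) by
    simpa [(isMultiplicative_caQuotient _).map_one] using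
      caQuotient_prime_pow_le_of_le hp hfirst a.zero_le
  refine caQuotient_thirtieth_le ?_ (pow_ne_zero _ hp.ne_zero)
  have hσ : sigma1 1 = 1 := by simp [sigma1]
  rw [sigma1_prime_pow_succ hp, pow_zero, zero_add, pow_one, hσ, mul_one, one_pow, one_pow,
    mul_one, one_mul]
  exact add_one_pow_thirty_le h13

lemma caQuotient_thirtieth_le_of_primes_le_eleven {n a b c d e : ℕ} (hn : n ≠ 0)
    (h2 : caQuotient (1 / 30) (2 ^ n.factorization 2) ≤ caQuotient (1 / 30) (2 ^ a))
    (h3 : caQuotient (1 / 30) (3 ^ n.factorization 3) ≤ caQuotient (1 / 30) (3 ^ b))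
    (h5 : caQuotient (1 / 30) (5 ^ n.factorization 5) ≤ caQuotient (1 / 30) (5 ^ c))
    (h7 : caQuotient (1 / 30) (7 ^ n.factorization 7) ≤ caQuotient (1 / 30) (7 ^ d))
    (h11 : caQuotient (1 / 30) (11 ^ n.factorization 11) ≤ caQuotient (1 / 30) (11 ^ e)) :
    caQuotient (1 / 30) n ≤ caQuotient (1 / 30) (2 ^ a * 3 ^ b * 5 ^ c * 7 ^ d * 11 ^ e) := by
  have hfact : (2 ^ a * 3 ^ b * 5 ^ c * 7 ^ d * 11 ^ e).factorization =
      .single 2 a + .single 3 b + .single 5 c + .single 7 d + .single 11 e := by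
    rw [Nat.factorization_mul (by positivity) (by positivity),
      Nat.factorization_mul (by positivity) (by positivity),
      Nat.factorization_mul (by positivity) (by positivity),
      Nat.factorization_mul (by positivity) (by positivity),
      Nat.Prime.factorization_pow (by norm_num), Nat.Prime.factorization_pow (by norm_num),
      Nat.Prime.factorization_pow (by norm_num), Nat.Prime.factorization_pow (by norm_num),
      Nat.Prime.factorization_pow (by norm_num)]
  refine multiplicative_le_of_forall_prime (isMultiplicative_caQuotient _) (caQuotient_nonneg _) hn
    (by positivity) fun p hp => ?_
  rw [hfact]
  rcases lt_or_ge p 13 with h13 | h13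
  · obtain rfl | rfl | rfl | rfl | rfl : p = 2 ∨ p = 3 ∨ p = 5 ∨ p = 7 ∨ p = 11 := by
      interval_cases p <;> revert hp <;> norm_num
    · simpa [Finsupp.single_apply] using h2
    · simpa [Finsupp.single_apply] using h3
    · simpa [Finsupp.single_apply] using h5
    · simpa [Finsupp.single_apply] using h7
    · simpa [Finsupp.single_apply] using h11
  · have hp0 (q : ℕ) (hq : q < 13) (k : ℕ) : Finsupp.single q k p = 0 :=
      Finsupp.single_eq_of_ne (by omega)
    simpa [hp0, (isMultiplicative_caQuotient _).map_one] using
      caQuotient_thirtieth_prime_pow_le_one hp h13 (n.factorization p)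

lemma colossallyAbundant_55440 : ColossallyAbundant 55440 := by
  refine ⟨by norm_num, 1 / 30, by norm_num, fun m hm => ?_⟩
  change caQuotient (1 / 30) m ≤ caQuotient (1 / 30) 55440
  rw [show 55440 = 2 ^ 4 * 3 ^ 2 * 5 ^ 1 * 7 ^ 1 * 11 ^ 1 by norm_num]
  exact caQuotient_thirtieth_le_of_primes_le_eleven (by omega) (caQuotient_thirtieth_two_pow_le _)
    (caQuotient_thirtieth_three_pow_le _) (caQuotient_thirtieth_prime_pow_le_of_mem (by simp) _)
    (caQuotient_thirtieth_prime_pow_le_of_mem (by simp) _)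
    (caQuotient_thirtieth_prime_pow_le_of_mem (by simp) _)

lemma sigma1_prod_primes_le_eleven (a b c d e : ℕ) :
    sigma1 (2 ^ a * 3 ^ b * 5 ^ c * 7 ^ d * 11 ^ e) =
      sigma1 (2 ^ a) * sigma1 (3 ^ b) * sigma1 (5 ^ c) * sigma1 (7 ^ d) * sigma1 (11 ^ e) := by
  simp only [sigma1_eq_sigma]
  rw [isMultiplicative_sigma.map_mul_of_coprime, isMultiplicative_sigma.map_mul_of_coprime,
    isMultiplicative_sigma.map_mul_of_coprime, isMultiplicative_sigma.map_mul_of_coprime]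
  all_goals
    repeat' refine Nat.Coprime.mul_left ?_ ?_
    all_goals exact Nat.Coprime.pow _ _ (by norm_num)

lemma sigma1_10080 : sigma1 10080 = 39312 :=
  (sigma1_prod_primes_le_eleven 5 2 1 1 0).trans (by decide +kernel)

lemma sigma1_27720 : sigma1 27720 = 112320 :=
  (sigma1_prod_primes_le_eleven 3 2 1 1 1).trans (by decide +kernel)

lemma caQuotient_thirtieth_le_10080_of_primes_le_eleven {n a b c d e : ℕ} (hn : n ≠ 0)
    (h2 : caQuotient (1 / 30) (2 ^ n.factorization 2) ≤ caQuotient (1 / 30) (2 ^ a))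
    (h3 : caQuotient (1 / 30) (3 ^ n.factorization 3) ≤ caQuotient (1 / 30) (3 ^ b))
    (h5 : caQuotient (1 / 30) (5 ^ n.factorization 5) ≤ caQuotient (1 / 30) (5 ^ c))
    (h7 : caQuotient (1 / 30) (7 ^ n.factorization 7) ≤ caQuotient (1 / 30) (7 ^ d))
    (h11 : caQuotient (1 / 30) (11 ^ n.factorization 11) ≤ caQuotient (1 / 30) (11 ^ e))
    (h : (sigma1 (2 ^ a) * sigma1 (3 ^ b) * sigma1 (5 ^ c) * sigma1 (7 ^ d) * sigma1 (11 ^ e)) ^ 30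
        * 10080 ^ 31 ≤ 39312 ^ 30 * (2 ^ a * 3 ^ b * 5 ^ c * 7 ^ d * 11 ^ e) ^ 31) :
    caQuotient (1 / 30) n ≤ caQuotient (1 / 30) 10080 := by
  rw [← sigma1_prod_primes_le_eleven, ← sigma1_10080] at h
  exact (caQuotient_thirtieth_le_of_primes_le_eleven hn h2 h3 h5 h7 h11).trans
    (caQuotient_thirtieth_le h (by positivity))

lemma caQuotient_thirtieth_le_10080_of_not_dvd {n : ℕ} (hn : n ≠ 0) (hdvd : ¬ 2520 ∣ n) :
    caQuotient (1 / 30) n ≤ caQuotient (1 / 30) 10080 := by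
  have h2 := caQuotient_thirtieth_two_pow_le (n.factorization 2)
  have h3 := caQuotient_thirtieth_three_pow_le (n.factorization 3)
  have h5 := caQuotient_thirtieth_prime_pow_le_of_mem (p := 5) (by simp) (n.factorization 5)
  have h7 := caQuotient_thirtieth_prime_pow_le_of_mem (p := 7) (by simp) (n.factorization 7)
  have h11 := caQuotient_thirtieth_prime_pow_le_of_mem (p := 11) (by simp) (n.factorization 11)
  obtain hd | hd | hd | hd :
    ¬ 2 ^ (2 + 1) ∣ n ∨ ¬ 3 ^ (1 + 1) ∣ n ∨ ¬ 5 ^ (0 + 1) ∣ n ∨ ¬ 7 ^ (0 + 1) ∣ n := by omega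
  · replace h2 := caQuotient_pow_factorization_le_of_not_dvd Nat.prime_two hn
      (caQuotient_thirtieth_le (by decide +kernel)) hd
    exact caQuotient_thirtieth_le_10080_of_primes_le_eleven hn h2 h3 h5 h7 h11 (by decide +kernel)
  · replace h3 := caQuotient_pow_factorization_le_of_not_dvd Nat.prime_three hn
      (caQuotient_thirtieth_le (by decide +kernel)) hd
    exact caQuotient_thirtieth_le_10080_of_primes_le_eleven hn h2 h3 h5 h7 h11 (by decide +kernel)
  · replace h5 := caQuotient_pow_factorization_le_of_not_dvd Nat.prime_five hn
      (caQuotient_thirtieth_le (by decide +kernel)) hd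
    exact caQuotient_thirtieth_le_10080_of_primes_le_eleven hn h2 h3 h5 h7 h11 (by decide +kernel)
  · replace h7 := caQuotient_pow_factorization_le_of_not_dvd Nat.prime_seven hn
      (caQuotient_thirtieth_le (by decide +kernel)) hd
    exact caQuotient_thirtieth_le_10080_of_primes_le_eleven hn h2 h3 h5 h7 h11 (by decide +kernel)

lemma caQuotient_thirtieth_le_10080_of_dvd {n : ℕ} (hdvd : 2520 ∣ n) (hdvd11 : ¬ 11 ∣ n)
    (hlo : 10080 < n) (hhi : n < 55440) :
    caQuotient (1 / 30) n ≤ caQuotient (1 / 30) 10080 := by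
  have hn : n ≠ 0 := by omega
  have h2 := caQuotient_thirtieth_two_pow_le (n.factorization 2)
  have h3 := caQuotient_thirtieth_three_pow_le (n.factorization 3)
  have h5 := caQuotient_thirtieth_prime_pow_le_of_mem (p := 5) (by simp) (n.factorization 5)
  have h7 := caQuotient_thirtieth_prime_pow_le_of_mem (p := 7) (by simp) (n.factorization 7)
  have h11 : caQuotient (1 / 30) (11 ^ n.factorization 11) ≤ caQuotient (1 / 30) (11 ^ 0) := by
    rw [Nat.factorization_eq_zero_of_not_dvd hdvd11]
  obtain hd | hd | hd | hd | hd :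
      ¬ 2 ^ (3 + 1) ∣ n ∨ 2 ^ 5 ∣ n ∨ 3 ^ 3 ∣ n ∨ 5 ^ 2 ∣ n ∨ 7 ^ 2 ∣ n := by
    obtain ⟨k, rfl⟩ := hdvd
    have : 4 < k := by omega
    have : k < 22 := by omega
    interval_cases k <;> omega
  · replace h2 := caQuotient_pow_factorization_le_of_not_dvd Nat.prime_two hn
      (caQuotient_thirtieth_le (by decide +kernel)) hd
    exact caQuotient_thirtieth_le_10080_of_primes_le_eleven hn h2 h3 h5 h7 h11 (by decide +kernel)
  · replace h2 := caQuotient_pow_factorization_le_of_dvd Nat.prime_two hn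
      (caQuotient_thirtieth_le (by decide +kernel)) hd
    exact caQuotient_thirtieth_le_10080_of_primes_le_eleven hn h2 h3 h5 h7 h11 (by decide +kernel)
  · replace h3 := caQuotient_pow_factorization_le_of_dvd Nat.prime_three hn
      (caQuotient_thirtieth_le (by decide +kernel)) hd
    exact caQuotient_thirtieth_le_10080_of_primes_le_eleven hn h2 h3 h5 h7 h11 (by decide +kernel)
  · replace h5 := caQuotient_pow_factorization_le_of_dvd Nat.prime_five hn
      (caQuotient_thirtieth_le (by decide +kernel)) hd
    exact caQuotient_thirtieth_le_10080_of_primes_le_eleven hn h2 h3 h5 h7 h11 (by decide +kernel)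
  · replace h7 := caQuotient_pow_factorization_le_of_dvd Nat.prime_seven hn
      (caQuotient_thirtieth_le (by decide +kernel)) hd
    exact caQuotient_thirtieth_le_10080_of_primes_le_eleven hn h2 h3 h5 h7 h11 (by decide +kernel)

lemma caQuotient_thirtieth_le_10080 {n : ℕ} (hlo : 10080 < n) (hhi : n < 55440) (hne : n ≠ 27720) :
    caQuotient (1 / 30) n ≤ caQuotient (1 / 30) 10080 := by
  by_cases hdvd : 2520 ∣ n
  · exact caQuotient_thirtieth_le_10080_of_dvd hdvd (by omega) hlo hhi
  · exact caQuotient_thirtieth_le_10080_of_not_dvd (by omega) hdvd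

lemma log_le_of_le_pow {x : ℝ} {k : ℕ} (hx : 0 < x) (h : x ≤ 2.7182818283 ^ k) : log x ≤ k := by
  rw [log_le_iff_le_exp hx, ← exp_one_pow]
  exact h.trans (by gcongr; exact exp_one_gt_d9.le)

lemma robinF_le_robinF_10080_of_ne {n : ℕ} (hlo : 10080 < n) (hhi : n < 55440)
    (hne : n ≠ 27720) : robinF n ≤ robinF 10080 := by
  have hn : (10080 : ℝ) < n := by exact_mod_cast hlo
  have hlog1 : 1 < log n := one_lt_log_natCast (by omega)
  have hlog : log n ≤ 11 := by
    have hn' : (n : ℝ) ≤ 55440 := by exact_mod_cast hhi.le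
    exact_mod_cast log_le_of_le_pow (k := 11) (by linarith) (hn'.trans (by norm_num))
  have hloglog : log (log n) ≤ 5 / 2 := by
    have h := log_le_of_le_pow (x := 11 ^ 2) (k := 5) (by norm_num) (by norm_num)
    rw [log_pow] at h
    push_cast at h
    linarith [log_le_log (by linarith) hlog]
  rw [robinF_eq_caQuotient_mul_exp (1 / 30) (by omega),
    robinF_eq_caQuotient_mul_exp (1 / 30) (n := 10080) (by norm_num)]
  refine mul_le_mul (caQuotient_thirtieth_le_10080 hlo hhi hne) (exp_le_exp.2 ?_) (exp_pos _).le
    (caQuotient_nonneg _ _)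
  refine mul_sub_log_log_le (one_lt_log_natCast (by norm_num))
    (log_le_log (by norm_num) (by exact_mod_cast hlo.le)) ?_
  nlinarith [log_pos hlog1]

lemma robinF_27720_le_robinF_10080 : robinF 27720 ≤ robinF 10080 := by
  set t := log (10080 : ℝ) with ht
  have ht1 : 1 < t := mod_cast one_lt_log_natCast (n := 10080) (by norm_num)
  have ht10 : t ≤ 10 := mod_cast log_le_of_le_pow (x := 10080) (k := 10) (by norm_num) (by norm_num)
  have hlogt : 3 * log t ≤ 7 := by
    have h := log_le_of_le_pow (x := 10 ^ 3) (k := 7) (by norm_num) (by norm_num)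
    rw [log_pow] at h
    push_cast at h
    linarith [log_le_log (by linarith) ht10]
  have hstep : t + 1 ≤ log 27720 := by
    rw [ht, ← log_exp 1, ← log_mul (by norm_num) (exp_ne_zero 1)]
    exact log_le_log (by positivity) (by linarith [exp_one_lt_d9])
  have hloglog : log t + 1 / 11 ≤ log (log 27720) := by
    calc log t + 1 / 11 ≤ log t + (t + 1 - t) / (t + 1) := by
          gcongr <;> linarith
      _ ≤ log (t + 1) := by
          linarith [sub_div_le_log_sub_log (x := t) (y := t + 1) (by linarith) (by linarith)]
      _ ≤ log (log 27720) := log_le_log (by linarith) hstep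
  have hlogt0 : 0 < log t := log_pos ht1
  simp only [robinF, sigma1_27720, sigma1_10080]
  push_cast
  rw [← ht, div_le_div_iff₀ (by linarith) (by linarith)]
  linarith

lemma robinF_le_robinF_10080 {n : ℕ} (hlo : 10080 < n) (hhi : n < 55440) :
    robinF n ≤ robinF 10080 := by
  rcases eq_or_ne n 27720 with rfl | hne
  · exact robinF_27720_le_robinF_10080
  · exact robinF_le_robinF_10080_of_ne hlo hhi hne

theorem next_CA_is_XA_general
    (N N' : ℕ) (hN : ColossallyAbundant N) (hN' : ColossallyAbundant N')
    (hcons : ∀ m : ℕ, N < m → m < N' → ¬ ColossallyAbundant m)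
    (n : ℕ) (hn : ExtremelyAbundant n) (hn1 : 10080 < n)
    (hNn : N < n) (hnN' : n < N') :
    ExtremelyAbundant N' := by
  obtain rfl | ⟨-, hmax⟩ := hn
  · exact absurd hn1 (lt_irrefl _)
  have hN10080 : 10080 ≤ N := by
    by_contra! hlt
    have hle : N' ≤ 55440 := not_lt.1 fun hlt' =>
      hcons 55440 (by omega) hlt' colossallyAbundant_55440
    exact (hmax 10080 le_rfl hn1).not_ge (robinF_le_robinF_10080 hn1 (hnN'.trans_le hle))
  have hmax' {m : ℕ} (hNm : N < m) (hmN' : m < N') : robinF m < max (robinF N) (robinF N') :=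
    robinF_lt_max hN hN' hcons (by omega) hNm hmN'
  have hN_lt_n : robinF N < robinF n := hmax N hN10080 hNn
  have hn_lt_N' : robinF n < robinF N' :=
    (lt_max_iff.1 (hmax' hNn hnN')).resolve_left hN_lt_n.not_gt
  refine .inr ⟨hn1.trans hnN', fun m hm hmN' => ?_⟩
  rcases lt_or_ge m n with hmn | hnm
  · exact (hmax m hm hmn).trans hn_lt_N'
  · simpa [max_eq_right (hN_lt_n.trans hn_lt_N').le] using hmax' (hNn.trans_le hnm) hmN'

theorem next_CA_is_XA
    (N N' : ℕ) (hN : ColossallyAbundant N) (hN' : ColossallyAbundant N')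
    (hlt : N < N') (hcons : ∀ m : ℕ, N < m → m < N' → ¬ ColossallyAbundant m)
    (h3 : 3 ≤ N)
    (n : ℕ) (hn : ExtremelyAbundant n) (hn1 : 10080 < n)
    (hNn : N < n) (hnN' : n < N')
    (hrobin : ∀ m : ℕ, N ≤ m → m ≤ N' → robinF m ≤ max (robinF N) (robinF N')) :
    ExtremelyAbundant N' :=
  next_CA_is_XA_general N N' hN hN' hcons n hn hn1 hNn hnN'
end
end
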